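/- Let b ∈ ℝ and define x : ℝ² → ℝ³ by x(t,u) = (e^{t}, e^{u+t}, e^{-t} - 2b²u e^{t}). Then x satisfies at every (t,u) ∈ ℝ²: ∂²x/∂t² = x; ∂²x/∂t∂u = ∂x/∂u; and ∂²x/∂u² = -b²e^{2t}·∂x/∂t + ∂x/∂u + b²e^{2t}·x. Moreover, when b² = 1/2, every point (x₁,x₂,x₃) in the image of x satisfies x₁ > 0, x₂ > 0 and x₃ = 1/x₁ + x₁(ln x₁ - ln x₂). -/

import Mathlib

/-!
All four claims are explicit computation. The first-order partials of the surface are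

* `x_t = (eᵗ, e^{u+t}, -e⁻ᵗ - 2b²u eᵗ)`,
* `x_u = (0, e^{u+t}, -2b² eᵗ)`,

proved coordinatewise as `HasDerivAt` facts (`Pt_xSurf`, `Pu_xSurf`), so that no `deriv` takes its
default value at a non-differentiable point; differentiating once more gives the three second-order
equations. In the third coordinate of the `u`-`u` equation the terms in `b⁴` cancel because they
enter `x_t` and `x` alike, and what remains is `b² eᵗ - 2b² eᵗ + b² eᵗ = 0`, since
`e^{2t} e⁻ᵗ = eᵗ`. When `b² = 1/2`, `u` is recovered on the surface as `log x₂ - log x₁`.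
-/

noncomputable section
open Real

/-- Partial derivative in the first variable, for vector-valued functions of two reals. -/
def Pt {E : Type*} [NormedAddCommGroup E] [NormedSpace ℝ E]
    (g : ℝ → ℝ → E) : ℝ → ℝ → E := fun t u => deriv (fun s => g s u) t

/-- Partial derivative in the second variable, for vector-valued functions of two reals. -/
def Pu {E : Type*} [NormedAddCommGroup E] [NormedSpace ℝ E]
    (g : ℝ → ℝ → E) : ℝ → ℝ → E := fun t u => deriv (fun s => g t s) u

/-- The surface `x(t,u) = (eᵗ, e^{u+t}, e⁻ᵗ - 2b²u eᵗ)` of Case (1) of Theorem 6.2. -/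
def xSurf (b : ℝ) : ℝ → ℝ → (Fin 3 → ℝ) := fun t u =>
  ![Real.exp t, Real.exp (u + t), Real.exp (-t) - 2 * b^2 * u * Real.exp t]

theorem Pt_xSurf (b : ℝ) : Pt (xSurf b) = fun t u =>
    ![Real.exp t, Real.exp (u + t), -Real.exp (-t) - 2 * b^2 * u * Real.exp t] := by
  funext t u
  refine HasDerivAt.deriv (hasDerivAt_pi.2 fun i => ?_)
  fin_cases i
  · exact Real.hasDerivAt_exp t
  · simpa [xSurf] using ((hasDerivAt_id t).const_add u).exp
  · simpa [xSurf] using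
      (hasDerivAt_id t).fun_neg.exp.fun_sub ((Real.hasDerivAt_exp t).const_mul (2 * b^2 * u))

theorem Pu_xSurf (b : ℝ) : Pu (xSurf b) = fun t u =>
    ![0, Real.exp (u + t), -(2 * b^2 * Real.exp t)] := by
  funext t u
  refine HasDerivAt.deriv (hasDerivAt_pi.2 fun i => ?_)
  fin_cases i
  · exact hasDerivAt_const u (Real.exp t)
  · simpa [xSurf] using ((hasDerivAt_id u).add_const t).exp
  · simpa [xSurf] using
      (((hasDerivAt_id u).const_mul (2 * b^2)).mul_const (Real.exp t)).const_sub (Real.exp (-t))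

/-- **Gauss equations (6.21)–(6.23) and identification with
Theorem 6.2(i).** -/
theorem stmt12 (b : ℝ) :
    (∀ t u : ℝ, Pt (Pt (xSurf b)) t u = xSurf b t u) ∧
    (∀ t u : ℝ, Pt (Pu (xSurf b)) t u = Pu (xSurf b) t u) ∧
    (∀ t u : ℝ, Pu (Pu (xSurf b)) t u
        = (-(b^2 * Real.exp (2*t))) • Pt (xSurf b) t u + Pu (xSurf b) t u
          + (b^2 * Real.exp (2*t)) • xSurf b t u) ∧
    (b^2 = 1/2 → ∀ t u : ℝ,
      0 < xSurf b t u 0 ∧ 0 < xSurf b t u 1 ∧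
      xSurf b t u 2 = 1 / xSurf b t u 0
        + xSurf b t u 0 * (Real.log (xSurf b t u 0) - Real.log (xSurf b t u 1))) := by
  refine ⟨fun t u => ?_, fun t u => ?_, fun t u => ?_, fun hb t u => ?_⟩
  · rw [Pt_xSurf]
    refine HasDerivAt.deriv (hasDerivAt_pi.2 fun i => ?_)
    fin_cases i
    · exact Real.hasDerivAt_exp t
    · simpa [xSurf] using ((hasDerivAt_id t).const_add u).exp
    · simpa [xSurf] using
        (hasDerivAt_id t).fun_neg.exp.fun_neg.fun_sub ((Real.hasDerivAt_exp t).const_mul (2 * b^2 * u))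
  · rw [Pu_xSurf]
    refine HasDerivAt.deriv (hasDerivAt_pi.2 fun i => ?_)
    fin_cases i
    · exact hasDerivAt_const t (0 : ℝ)
    · simpa using ((hasDerivAt_id t).const_add u).exp
    · simpa using ((Real.hasDerivAt_exp t).const_mul (2 * b^2)).fun_neg
  · have huu : Pu (Pu (xSurf b)) t u = ![0, Real.exp (u + t), 0] := by
      rw [Pu_xSurf]
      refine HasDerivAt.deriv (hasDerivAt_pi.2 fun i => ?_)
      fin_cases i
      · exact hasDerivAt_const u (0 : ℝ)
      · simpa using ((hasDerivAt_id u).add_const t).exp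
      · exact hasDerivAt_const u (-(2 * b^2 * Real.exp t))
    have he : Real.exp (2 * t) * Real.exp (-t) = Real.exp t := by
      rw [← Real.exp_add]
      congr 1
      ring
    rw [huu, Pt_xSurf, Pu_xSurf]
    ext i
    fin_cases i
    · simp [xSurf]
    · simp [xSurf]
    · simp [xSurf]
      linear_combination (-2 * b^2) * he
  · refine ⟨Real.exp_pos t, Real.exp_pos (u + t), ?_⟩
    simp [xSurf, hb, Real.exp_neg]
    ring
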